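/- arXiv:2211.03830 — 6 statements merged into one kernel-verified Lean document; each statement's English description precedes it below -/
import Mathlib

section
/- Let b be a real number. Then the inequality y/2 + ((μ − y)/y)·((2xy − bμ(x+y))/(x + y − μ)) ≤ bμ holds for every μ > 0 and every pair (x,y) with 0 < x ≤ μ, 0 < y ≤ μ and x + y > μ, if and only if b ≥ 16/27. -/
/-!
Clearing the positive denominator `y * (x + y - μ)` turns `φ₁(x, y) ≤ b * μ` into
`y ^ 2 * (x + y - μ) / 2 + 2 * x * y * (μ - y) ≤ b * μ ^ 2 * x`. After division by `x` the left
side is nondecreasing in `x`, so the worst case is `x = μ`, where the inequality reads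
`y ^ 3 / 2 + 2 * μ * y * (μ - y) ≤ b * μ ^ 3`. On `0 < y ≤ μ` this cubic has maximum
`16 / 27 * μ ^ 3`, attained at `y = 2 / 3 * μ`.
-/

section Field

variable {K : Type*} [Field K]

/-- The function `φ₀(x, y)` with parameters `b` and `μ`. By the convention `a / 0 = 0` it vanishes
where `y = 0` or `x + y = μ`, which is outside the domain `X^μ`. -/
def phi0 (b μ x y : K) : K :=
  ((μ - y) / y) * ((2 * x * y - b * μ * (x + y)) / (x + y - μ))

/-- The function `φ₁(x, y)` with parameters `b` and `μ`, to be compared with `b * μ` on the domain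
`X^μ`. -/
def phi1 (b μ x y : K) : K :=
  y / 2 + phi0 b μ x y

variable {b μ x y : K}

theorem mul_phi0 (hy : y ≠ 0) (hxy : x + y - μ ≠ 0) :
    y * (x + y - μ) * phi0 b μ x y = (μ - y) * (2 * x * y - b * μ * (x + y)) := by
  unfold phi0
  field_simp

theorem mul_sub_phi1 (hy : y ≠ 0) (hxy : x + y - μ ≠ 0) :
    y * (x + y - μ) * (b * μ - phi1 b μ x y) =
      b * μ ^ 2 * x - (y ^ 2 * (x + y - μ) / 2 + 2 * x * y * (μ - y)) := by
  unfold phi1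
  linear_combination -mul_phi0 hy hxy

variable [LinearOrder K] [IsStrictOrderedRing K]

theorem phi1_le_mul_iff (hy : 0 < y) (hxy : μ < x + y) :
    phi1 b μ x y ≤ b * μ ↔
      y ^ 2 * (x + y - μ) / 2 + 2 * x * y * (μ - y) ≤ b * μ ^ 2 * x := by
  have hd : 0 < x + y - μ := sub_pos.2 hxy
  rw [← sub_nonneg, ← mul_nonneg_iff_of_pos_left (mul_pos hy hd),
    mul_sub_phi1 hy.ne' hd.ne', sub_nonneg]

theorem phi1_self_le_mul_iff (hy : 0 < y) :
    phi1 b μ μ y ≤ b * μ ↔ y ^ 3 / 2 + 2 * μ * y * (μ - y) ≤ b * μ ^ 3 := by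
  rw [phi1_le_mul_iff hy (lt_add_of_pos_right μ hy)]
  ring_nf

theorem phi1_le_mul_of_phi1_self_le_mul (hμ : 0 < μ) (hx : x ≤ μ) (hy : 0 < y) (hyμ : y ≤ μ)
    (hxy : μ < x + y) (h : phi1 b μ μ y ≤ b * μ) : phi1 b μ x y ≤ b * μ := by
  rw [phi1_self_le_mul_iff hy] at h
  have hx₀ : 0 ≤ x := by linarith
  have hgap : 0 ≤ y ^ 2 / 2 * ((μ - x) * (μ - y)) :=
    mul_nonneg (by positivity) (mul_nonneg (sub_nonneg.2 hx) (sub_nonneg.2 hyμ))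
  refine (phi1_le_mul_iff hy hxy).2 (le_of_mul_le_mul_left ?_ hμ)
  calc
    μ * (y ^ 2 * (x + y - μ) / 2 + 2 * x * y * (μ - y))
      = x * (y ^ 3 / 2 + 2 * μ * y * (μ - y)) - y ^ 2 / 2 * ((μ - x) * (μ - y)) := by ring
    _ ≤ x * (y ^ 3 / 2 + 2 * μ * y * (μ - y)) := sub_le_self _ hgap
    _ ≤ x * (b * μ ^ 3) := mul_le_mul_of_nonneg_left h hx₀
    _ = μ * (b * μ ^ 2 * x) := by ring

theorem cube_div_two_add_le (hy : y ≤ 8 / 3 * μ) :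
    y ^ 3 / 2 + 2 * μ * y * (μ - y) ≤ 16 / 27 * μ ^ 3 := by
  have hfactor : 16 / 27 * μ ^ 3 - (y ^ 3 / 2 + 2 * μ * y * (μ - y)) =
      (y - 2 / 3 * μ) ^ 2 * (4 / 3 * μ - y / 2) := by ring
  rw [← sub_nonneg, hfactor]
  exact mul_nonneg (sq_nonneg _) (by linarith)

theorem phi1_self_two_thirds_le_mul_iff (hμ : 0 < μ) :
    phi1 b μ μ (2 / 3 * μ) ≤ b * μ ↔ 16 / 27 ≤ b := by
  have hvalue : (2 / 3 * μ) ^ 3 / 2 + 2 * μ * (2 / 3 * μ) * (μ - 2 / 3 * μ) =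
      16 / 27 * μ ^ 3 := by ring
  rw [phi1_self_le_mul_iff (by positivity), hvalue, mul_le_mul_iff_left₀ (pow_pos hμ 3)]

theorem phi1_le_iff_general (hμ : 0 < μ) :
    (∀ x y : K, 0 < x → x ≤ μ → 0 < y → y ≤ μ → μ < x + y → phi1 b μ x y ≤ b * μ) ↔
      16 / 27 ≤ b := by
  constructor
  · intro h
    exact (phi1_self_two_thirds_le_mul_iff hμ).1
      (h μ (2 / 3 * μ) hμ le_rfl (by positivity) (by linarith) (by linarith))
  · intro hb x y _ hx hy hyμ hxy
    refine phi1_le_mul_of_phi1_self_le_mul hμ hx hy hyμ hxy ((phi1_self_le_mul_iff hy).2 ?_)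
    calc
      y ^ 3 / 2 + 2 * μ * y * (μ - y) ≤ 16 / 27 * μ ^ 3 := cube_div_two_add_le (by linarith)
      _ ≤ b * μ ^ 3 := mul_le_mul_of_nonneg_right hb (by positivity)

end Field

theorem phi1_le_iff (b : ℝ) :
    (∀ μ : ℝ, 0 < μ → ∀ x y : ℝ, 0 < x → x ≤ μ → 0 < y → y ≤ μ → μ < x + y →
      y / 2 + ((μ - y) / y) * ((2 * x * y - b * μ * (x + y)) / (x + y - μ)) ≤ b * μ) ↔
    b ≥ 16 / 27 :=
  ⟨fun h => (phi1_le_iff_general one_pos).1 (h 1 one_pos),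
    fun hb _ hμ => (phi1_le_iff_general hμ).2 hb⟩
end

section
/- Let b be a real number. Then the inequality (3/2)x₂ − x₂(4x₂ − x)/(2y) + ((μ − y)/y)·((2xy − bμ(x+y))/(x + y − μ)) ≤ bμ holds for every μ > 0, every pair (x,y) with 0 < x ≤ μ, 0 < y ≤ μ, x + y > μ, and every x₂ with 0 < x₂ ≤ μ, if and only if b ≥ (1609·√1609 − 42427)/34992. -/
/-!
The variables `x₂`, `x`, `y` can be eliminated one at a time. In `x₂` the function `φ₃` is a concave
quadratic, with vertex `(x + 3y)/8`, an admissible value. After clearing denominators, the condition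
at the vertex, divided by `x`, is most restrictive on the edge `x = μ` of `X^μ`. There it says that
a cubic in `y` is at most `32bμ³`. The derivative `27y² - 116μy + 65μ²` of this cubic vanishes at
`y = (58 ± √1609)μ/27`; the smaller root lies in `(0, μ)` and is where the cubic is maximal.
-/

namespace PhiThree

section Elimination

variable {K : Type*} [Field K] {b μ x y z : K}

/-- The function `φ₀` of the paper, with its parameters `b` and `μ` explicit. -/
def phi₀ (b μ x y : K) : K :=
  ((μ - y) / y) * ((2 * x * y - b * μ * (x + y)) / (x + y - μ))

/-- The function `φ₃(x, x₂, y)` of the paper, with its parameters `b` and `μ` explicit. -/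
def phi₃ (b μ x x₂ y : K) : K :=
  (3 / 2) * x₂ - x₂ * (4 * x₂ - x) / (2 * y) + phi₀ b μ x y

/-- The left-hand side of the polynomial form `vertexPoly μ x y ≤ 32 * b * μ ^ 2 * x` of the
inequality `φ₃ ≤ b * μ` at the maximizing value `x₂ = (x + 3 * y) / 8`. -/
def vertexPoly (μ x y : K) : K :=
  (x + 3 * y) ^ 2 * (x + y - μ) + 64 * (μ - y) * x * y

/-- The cubic in `y` whose upper bound by `32 * b * μ ^ 3` is the condition on the edge `x = μ`. -/
def edgeCubic (μ y : K) : K :=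
  9 * y ^ 3 - 58 * μ * y ^ 2 + 65 * μ ^ 2 * y

theorem vertexPoly_self (μ y : K) : vertexPoly μ μ y = edgeCubic μ y := by
  unfold vertexPoly edgeCubic
  ring

variable [LinearOrder K] [IsStrictOrderedRing K]

theorem phi₃_le_phi₃_vertex (b μ x z : K) (hy : 0 < y) :
    phi₃ b μ x z y ≤ phi₃ b μ x ((x + 3 * y) / 8) y := by
  have complete_square : phi₃ b μ x ((x + 3 * y) / 8) y - phi₃ b μ x z y =
      (x + 3 * y - 8 * z) ^ 2 / (32 * y) := by
    unfold phi₃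
    field_simp
    ring
  rw [← sub_nonneg, complete_square]
  positivity

theorem phi₃_vertex_le_iff (hy : 0 < y) (hxy : μ < x + y) :
    phi₃ b μ x ((x + 3 * y) / 8) y ≤ b * μ ↔ vertexPoly μ x y ≤ 32 * b * μ ^ 2 * x := by
  have : 0 < x + y - μ := sub_pos.2 hxy
  have common_denominator : phi₃ b μ x ((x + 3 * y) / 8) y - b * μ =
      (vertexPoly μ x y - 32 * b * μ ^ 2 * x) / (32 * y * (x + y - μ)) := by
    unfold phi₃ phi₀ vertexPoly
    field_simp
    ring
  rw [← sub_nonpos, common_denominator, div_le_iff₀ (by positivity), zero_mul, sub_nonpos]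

theorem forall_phi₃_le_iff (hx : 0 < x) (hxμ : x ≤ μ) (hy : 0 < y) (hyμ : y ≤ μ)
    (hxy : μ < x + y) :
    (∀ x₂, 0 < x₂ → x₂ ≤ μ → phi₃ b μ x x₂ y ≤ b * μ) ↔
      vertexPoly μ x y ≤ 32 * b * μ ^ 2 * x := by
  rw [← phi₃_vertex_le_iff hy hxy]
  exact ⟨fun h => h _ (by positivity) (by linarith),
    fun h x₂ _ _ => (phi₃_le_phi₃_vertex b μ x x₂ hy).trans h⟩

theorem mul_vertexPoly_le (hx : 0 ≤ x) (hxμ : x ≤ μ) (hy : 0 ≤ y) (hyμ : y ≤ μ) :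
    μ * vertexPoly μ x y ≤ x * edgeCubic μ y := by
  have factorization : x * edgeCubic μ y - μ * vertexPoly μ x y =
      (μ - x) * (μ * x * (x + 7 * y) + 9 * y ^ 2 * (μ - y)) := by
    unfold edgeCubic vertexPoly
    ring
  have hμ : 0 ≤ μ := hx.trans hxμ
  rw [← sub_nonneg, factorization]
  exact mul_nonneg (sub_nonneg.2 hxμ)
    (add_nonneg (by positivity) (mul_nonneg (by positivity) (sub_nonneg.2 hyμ)))

theorem forall_vertexPoly_le_iff (hy : 0 < y) (hyμ : y ≤ μ) :
    (∀ x, 0 < x → x ≤ μ → μ < x + y → vertexPoly μ x y ≤ 32 * b * μ ^ 2 * x) ↔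
      edgeCubic μ y ≤ 32 * b * μ ^ 3 := by
  have hμ : 0 < μ := hy.trans_le hyμ
  constructor
  · intro h
    calc edgeCubic μ y = vertexPoly μ μ y := (vertexPoly_self μ y).symm
      _ ≤ 32 * b * μ ^ 2 * μ := h μ hμ le_rfl (lt_add_of_pos_right μ hy)
      _ = 32 * b * μ ^ 3 := by ring
  · intro h x hx hxμ _
    refine le_of_mul_le_mul_left ?_ hμ
    calc μ * vertexPoly μ x y ≤ x * edgeCubic μ y := mul_vertexPoly_le hx.le hxμ hy.le hyμ
      _ ≤ x * (32 * b * μ ^ 3) := mul_le_mul_of_nonneg_left h hx.le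
      _ = μ * (32 * b * μ ^ 2 * x) := by ring

end Elimination

section Threshold

/-- The least `b` for which `φ₃ ≤ b * μ` throughout, obtained as `1 / 32` of the maximum of
`edgeCubic 1` on `(0, 1]`. -/
noncomputable def threshold : ℝ :=
  (1609 * √1609 - 42427) / 34992

/-- The smaller critical point of `edgeCubic μ`, where it attains its maximum on `(0, μ]`. -/
noncomputable def criticalPoint (μ : ℝ) : ℝ :=
  (58 - √1609) / 27 * μ

variable {b μ y : ℝ}

theorem forty_lt_sqrt_1609 : 40 < √(1609 : ℝ) :=
  Real.lt_sqrt_of_sq_lt (by norm_num)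

theorem sqrt_1609_lt_forty_one : √(1609 : ℝ) < 41 :=
  (Real.sqrt_lt' (by norm_num)).2 (by norm_num)

theorem criticalPoint_pos (hμ : 0 < μ) : 0 < criticalPoint μ :=
  mul_pos (by linarith [sqrt_1609_lt_forty_one]) hμ

theorem criticalPoint_le_self (hμ : 0 ≤ μ) : criticalPoint μ ≤ μ :=
  mul_le_of_le_one_left hμ (by linarith [forty_lt_sqrt_1609])

/-- The squared factor is the double root at the maximum; the linear one then has its root at
`58μ/9` minus twice the critical point, since the roots of the cubic sum to `58μ/9`. -/
theorem threshold_sub_edgeCubic (μ y : ℝ) :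
    32 * threshold * μ ^ 3 - edgeCubic μ y =
      9 * (y - criticalPoint μ) ^ 2 * ((58 + 2 * √1609) / 27 * μ - y) := by
  have sqrt_sq : √(1609 : ℝ) ^ 2 = 1609 := Real.sq_sqrt (by norm_num)
  unfold threshold edgeCubic criticalPoint
  linear_combination
    (-(μ ^ 2 * y) / 27 + 58 / 729 * μ ^ 3 - 2 / 2187 * √1609 * μ ^ 3) * sqrt_sq

theorem edgeCubic_criticalPoint (μ : ℝ) :
    edgeCubic μ (criticalPoint μ) = 32 * threshold * μ ^ 3 := by
  linarith [threshold_sub_edgeCubic μ (criticalPoint μ)]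

theorem edgeCubic_le_threshold_mul (hμ : 0 ≤ μ) (hyμ : y ≤ μ) :
    edgeCubic μ y ≤ 32 * threshold * μ ^ 3 := by
  have le_other_root : y ≤ (58 + 2 * √1609) / 27 * μ :=
    hyμ.trans (le_mul_of_one_le_left hμ (by linarith [forty_lt_sqrt_1609]))
  rw [← sub_nonneg, threshold_sub_edgeCubic]
  exact mul_nonneg (by positivity) (sub_nonneg.2 le_other_root)

theorem forall_edgeCubic_le_iff (hμ : 0 < μ) :
    (∀ y, 0 < y → y ≤ μ → edgeCubic μ y ≤ 32 * b * μ ^ 3) ↔ threshold ≤ b := by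
  constructor
  · intro h
    have at_max := h _ (criticalPoint_pos hμ) (criticalPoint_le_self hμ.le)
    rw [edgeCubic_criticalPoint] at at_max
    linarith [le_of_mul_le_mul_right at_max (pow_pos hμ 3)]
  · intro hb y _ hyμ
    calc edgeCubic μ y ≤ 32 * threshold * μ ^ 3 := edgeCubic_le_threshold_mul hμ.le hyμ
      _ ≤ 32 * b * μ ^ 3 := by gcongr

end Threshold

end PhiThree

open PhiThree in
theorem phi3_le_iff_general (b : ℝ) {μ : ℝ} (hμ : 0 < μ) :
    (∀ x y : ℝ, 0 < x → x ≤ μ → 0 < y → y ≤ μ → μ < x + y →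
      ∀ x₂ : ℝ, 0 < x₂ → x₂ ≤ μ → phi₃ b μ x x₂ y ≤ b * μ) ↔ b ≥ threshold := by
  rw [ge_iff_le, ← forall_edgeCubic_le_iff hμ]
  constructor
  · intro h y hy hyμ
    refine (forall_vertexPoly_le_iff hy hyμ).1 fun x hx hxμ hxy => ?_
    exact (forall_phi₃_le_iff hx hxμ hy hyμ hxy).1 (h x y hx hxμ hy hyμ hxy)
  · intro h x y hx hxμ hy hyμ hxy
    refine (forall_phi₃_le_iff hx hxμ hy hyμ hxy).2 ?_
    exact (forall_vertexPoly_le_iff hy hyμ).2 (h y hy hyμ) x hx hxμ hxy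

theorem phi3_le_iff (b : ℝ) :
    (∀ μ : ℝ, 0 < μ → ∀ x y : ℝ, 0 < x → x ≤ μ → 0 < y → y ≤ μ → μ < x + y →
      ∀ x₂ : ℝ, 0 < x₂ → x₂ ≤ μ →
      (3 / 2) * x₂ - x₂ * (4 * x₂ - x) / (2 * y) +
        ((μ - y) / y) * ((2 * x * y - b * μ * (x + y)) / (x + y - μ)) ≤ b * μ) ↔
    b ≥ (1609 * Real.sqrt 1609 - 42427) / 34992 :=
  ⟨fun h => (phi3_le_iff_general b one_pos).1 (h 1 one_pos),
    fun hb _ hμ => (phi3_le_iff_general b hμ).2 hb⟩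
end

section
/- Let b ≥ 1/2 and μ > 0. For every fixed y with 0 < y ≤ μ, the function x ↦ ((μ − y)/y)·((2xy − bμ(x+y))/(x + y − μ)) is monotonically nondecreasing on the set of x with 0 < x ≤ μ and x + y > μ; that is, if (x,y) and (x',y) both lie in X^μ and x ≤ x', then φ₀(x,y) ≤ φ₀(x',y). -/
/-!
For fixed `y`, the last factor of `φ₀` is a linear fractional function of `x`, whose
monotonicity on the half-line where its denominator is positive is decided by the sign of its
determinant. That determinant is `(2y - bμ)(y - μ) + bμy = bμ² - 2y(μ - y)`, which is nonnegative
for `b ≥ 1/2` because `4y(μ - y) ≤ μ²` by AM-GM.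
-/

section

variable {K : Type*} [Field K] [LinearOrder K] [IsStrictOrderedRing K]

theorem monotoneOn_linear_div_linear {a b c d : K} (hdet : b * c ≤ a * d) :
    MonotoneOn (fun x ↦ (a * x + b) / (c * x + d)) {x | 0 < c * x + d} := by
  intro x hx x' hx' hxx'
  have hmul : (x' - x) * (b * c) ≤ (x' - x) * (a * d) :=
    mul_le_mul_of_nonneg_left hdet (sub_nonneg.2 hxx')
  exact (div_le_div_iff₀ hx hx').2 (by linear_combination hmul)

theorem two_mul_mul_sub_le_mul_sq {b : K} (hb : 1 / 2 ≤ b) (y μ : K) :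
    2 * y * (μ - y) ≤ b * μ ^ 2 :=
  calc
    2 * y * (μ - y) = 1 / 2 * (4 * y * (μ - y)) := by ring
    _ ≤ 1 / 2 * (y + (μ - y)) ^ 2 := by gcongr; exact four_mul_le_sq_add y (μ - y)
    _ = 1 / 2 * μ ^ 2 := by ring
    _ ≤ b * μ ^ 2 := by gcongr

theorem phi0_monotone_general {b μ y : K} (hb : 1 / 2 ≤ b) (hy : 0 < y) (hyμ : y ≤ μ) :
    MonotoneOn (fun x ↦ ((μ - y) / y) * ((2 * x * y - b * μ * (x + y)) / (x + y - μ)))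
      (Set.Ioi (μ - y)) := by
  have hdet : -(b * μ * y) * 1 ≤ (2 * y - b * μ) * (y - μ) := by
    linear_combination two_mul_mul_sub_le_mul_sq hb y μ
  have hquot : MonotoneOn (fun x ↦ (2 * x * y - b * μ * (x + y)) / (x + y - μ))
      (Set.Ioi (μ - y)) := by
    convert monotoneOn_linear_div_linear hdet using 1
    · ext x
      congr 1 <;> ring
    · ext x
      change μ - y < x ↔ 0 < 1 * x + (y - μ)
      constructor <;> intro _ <;> linarith
  intro x hx x' hx' hxx'
  exact mul_le_mul_of_nonneg_left (hquot hx hx' hxx') (div_nonneg (sub_nonneg.2 hyμ) hy.le)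

end

theorem phi0_monotone (b μ : ℝ) (hb : b ≥ 1 / 2) (hμ : 0 < μ)
    (x x' y : ℝ) (hy : 0 < y) (hyμ : y ≤ μ)
    (hx : 0 < x) (hxμ : x ≤ μ) (hxy : μ < x + y)
    (hx' : 0 < x') (hx'μ : x' ≤ μ) (hx'y : μ < x' + y)
    (hxx' : x ≤ x') :
    ((μ - y) / y) * ((2 * x * y - b * μ * (x + y)) / (x + y - μ)) ≤
      ((μ - y) / y) * ((2 * x' * y - b * μ * (x' + y)) / (x' + y - μ)) :=
  phi0_monotone_general hb hy hyμ (sub_lt_iff_lt_add.2 hxy) (sub_lt_iff_lt_add.2 hx'y) hxx'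
end

section
/- Let μ > 0. For all real numbers x, y with 0 < x ≤ μ, 0 < y ≤ μ and x + y > μ, it holds that x/2 + (2/3)·((μ − y)/y)·((3xy − μ(x+y))/(x + y − μ)) ≤ (2/3)·μ. -/
/-!
Write `f` for the left-hand side of the inequality. For `y ≠ 0` and `y ≠ μ`, `f` takes the value
`2 * μ / 3` at `x = 0`, so the numerator of `2 * μ / 3 - f` over the common denominator
`6 * y * (x + y - μ)` is divisible by `x`. Its cofactor is affine in `x`, with slope `-3 * y`, and
at the endpoint `x = μ` it is the perfect square `(3 * y - 2 * μ) ^ 2`; hence it is nonnegative for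
`x ≤ μ`. For `μ > 0`, the bound is attained at `(x, y) = (μ, 2 * μ / 3)`.
-/

theorem two_thirds_mu_sub_f_eq {K : Type*} [Field K] {μ x y : K} (h2 : (2 : K) ≠ 0)
    (h3 : (3 : K) ≠ 0) (hy : y ≠ 0) (hxy : x + y - μ ≠ 0) :
    (2 / 3) * μ -
        (x / 2 + (2 / 3) * ((μ - y) / y) * ((3 * x * y - μ * (x + y)) / (x + y - μ))) =
      x * ((3 * y - 2 * μ) ^ 2 + 3 * y * (μ - x)) / (2 * 3 * y * (x + y - μ)) := by
  field_simp
  ring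

theorem f_le_two_thirds_mu_general {K : Type*} [Field K] [LinearOrder K] [IsStrictOrderedRing K]
    {μ x y : K} (hx : 0 ≤ x) (hxμ : x ≤ μ) (hxy : μ < x + y) :
    x / 2 + (2 / 3) * ((μ - y) / y) * ((3 * x * y - μ * (x + y)) / (x + y - μ)) ≤
      (2 / 3) * μ := by
  have hy : 0 < y := by linarith
  have hs : 0 < x + y - μ := sub_pos.mpr hxy
  have cofactor_nonneg : 0 ≤ (3 * y - 2 * μ) ^ 2 + 3 * y * (μ - x) :=
    add_nonneg (sq_nonneg _) (mul_nonneg (by positivity) (sub_nonneg.mpr hxμ))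
  rw [← sub_nonneg, two_thirds_mu_sub_f_eq two_ne_zero three_ne_zero hy.ne' hs.ne']
  exact div_nonneg (mul_nonneg hx cofactor_nonneg) (by positivity)

theorem f_le_two_thirds_mu (μ : ℝ) (hμ : 0 < μ) (x y : ℝ)
    (hx : 0 < x) (hxμ : x ≤ μ) (hy : 0 < y) (hyμ : y ≤ μ) (hxy : μ < x + y) :
    x / 2 + (2 / 3) * ((μ - y) / y) * ((3 * x * y - μ * (x + y)) / (x + y - μ)) ≤
      (2 / 3) * μ :=
  f_le_two_thirds_mu_general hx.le hxμ hxy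
end

section
/- Let b > 0, β ≥ 1, and set a := (2bβ)/(√(4bβ + (β − 1)²) + β − 1). Then for all x, y > 0, the identity (βx + y + 2√(bβxy))/(x + y) = β + a − (a/(x + y))·(√x − (√(bβ)/a)·√y)² holds. -/
/-!
In the variables `u = √x`, `v = √y` the numerator is the quadratic form of the symmetric matrix
`!![β, c; c, 1]` with `c = √(bβ)`, so the left-hand side is its Rayleigh quotient. The number
`β + a` is the larger eigenvalue, since `a * (a + (β - 1)) = c ^ 2` is the characteristic equation,
and subtracting the form from `(β + a) * (u ^ 2 + v ^ 2)` leaves a rank-one form, which is `a` times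
a perfect square.
-/

/-- The positive solution `t` of `t * (t + p) = q` for `0 < q`. Written with the radical in the
denominator, as `a` is in the ratio identity, where `p = β - 1` and `q = b * β`. -/
noncomputable def posRoot (p q : ℝ) : ℝ :=
  2 * q / (√(4 * q + p ^ 2) + p)

section PosRoot

variable {p q : ℝ}

lemma sqrt_four_mul_add_sq_add_pos (hq : 0 < q) : 0 < √(4 * q + p ^ 2) + p :=
  neg_lt_iff_pos_add'.mp (Real.neg_sqrt_lt_of_sq_lt (by linarith))

lemma posRoot_pos (hq : 0 < q) : 0 < posRoot p q :=
  div_pos (by positivity) (sqrt_four_mul_add_sq_add_pos hq)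

lemma posRoot_mul_posRoot_add (hq : 0 < q) : posRoot p q * (posRoot p q + p) = q := by
  have h_den : √(4 * q + p ^ 2) + p ≠ 0 := (sqrt_four_mul_add_sq_add_pos hq).ne'
  have h_sq : √(4 * q + p ^ 2) ^ 2 = 4 * q + p ^ 2 := Real.sq_sqrt (by positivity)
  have h_add : posRoot p q + p = (√(4 * q + p ^ 2) + p) / 2 := by
    rw [posRoot, div_add' _ _ _ h_den, div_eq_div_iff h_den two_ne_zero]
    linear_combination -h_sq
  rw [h_add, posRoot, div_mul_div_cancel₀ h_den, mul_div_cancel_left₀ q two_ne_zero]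

end PosRoot

lemma quadratic_form_eq_eigenvalue_mul_sub_sq {K : Type*} [Field K] {a c p r : K} (ha : a ≠ 0)
    (h_char : a * (a + (p - r)) = c ^ 2) (u v : K) :
    p * u ^ 2 + r * v ^ 2 + 2 * (c * u * v) =
      (p + a) * (u ^ 2 + v ^ 2) - a * (u - c / a * v) ^ 2 := by
  field_simp
  linear_combination -v ^ 2 * h_char

theorem ratio_identity_general {p r q x y : ℝ} (hq : 0 < q) (hx : 0 ≤ x) (hy : 0 ≤ y)
    (hxy : x + y ≠ 0) :
    (p * x + r * y + 2 * √(q * x * y)) / (x + y) =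
      p + posRoot (p - r) q -
        posRoot (p - r) q / (x + y) * (√x - √q / posRoot (p - r) q * √y) ^ 2 := by
  have h_char : posRoot (p - r) q * (posRoot (p - r) q + (p - r)) = √q ^ 2 := by
    rw [posRoot_mul_posRoot_add hq, Real.sq_sqrt hq.le]
  have h_sqrt : √(q * x * y) = √q * √x * √y := by
    rw [Real.sqrt_mul (by positivity), Real.sqrt_mul hq.le]
  have h_form := quadratic_form_eq_eigenvalue_mul_sub_sq (posRoot_pos hq).ne' h_char √x √y
  rw [Real.sq_sqrt hx, Real.sq_sqrt hy, ← h_sqrt] at h_form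
  rw [h_form, sub_div, mul_div_cancel_right₀ _ hxy, mul_div_right_comm]

theorem ratio_identity (b β : ℝ) (hb : 0 < b) (hβ : 1 ≤ β) (x y : ℝ)
    (hx : 0 < x) (hy : 0 < y) :
    (β * x + y + 2 * Real.sqrt (b * β * x * y)) / (x + y) =
      β + (2 * b * β) / (Real.sqrt (4 * b * β + (β - 1) ^ 2) + β - 1) -
        ((2 * b * β) / (Real.sqrt (4 * b * β + (β - 1) ^ 2) + β - 1) / (x + y)) *
          (Real.sqrt x -
            (Real.sqrt (b * β) /
              ((2 * b * β) / (Real.sqrt (4 * b * β + (β - 1) ^ 2) + β - 1))) *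
              Real.sqrt y) ^ 2 := by
  have hbβ : 0 < b * β := by positivity
  simpa only [posRoot, one_mul, ← mul_assoc, ← add_sub_assoc] using
    ratio_identity_general (p := β) (r := 1) hbβ hx.le hy.le (add_pos hx hy).ne'
end

section
/- Let b > 0 and β ≥ 1. Then for all x, y > 0, (βx + y + 2√(bβxy))/(x + y) ≤ β + (2bβ)/(√(4bβ + (β − 1)²) + β − 1). -/
/-!
The constant `t = β + 2bβ / (√(4bβ + (β - 1)²) + β - 1)` is the larger root of
`(t - β)(t - 1) = bβ`, with the numerator of the quadratic formula rationalized. Hence by AM-GM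
`2√(bβxy) = 2√((t - β)x · (t - 1)y) ≤ (t - β)x + (t - 1)y`.
-/

theorem add_add_two_mul_sqrt_le_mul_add {α γ c t x y : ℝ} (hα : α ≤ t) (hγ : γ ≤ t)
    (hc : c ≤ (t - α) * (t - γ)) (hx : 0 ≤ x) (hy : 0 ≤ y) :
    α * x + γ * y + 2 * √(c * x * y) ≤ t * (x + y) := by
  have hαx : 0 ≤ (t - α) * x := mul_nonneg (sub_nonneg.mpr hα) hx
  have hγy : 0 ≤ (t - γ) * y := mul_nonneg (sub_nonneg.mpr hγ) hy
  have radicand_le : c * x * y ≤ (t - α) * x * ((t - γ) * y) := by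
    rw [mul_assoc, mul_mul_mul_comm]
    gcongr
  have amgm : 2 * √(c * x * y) ≤ (t - α) * x + (t - γ) * y := by
    refine two_mul_le_add_of_sq_le_mul hαx hγy ?_
    rw [Real.sq_sqrt']
    exact max_le radicand_le (mul_nonneg hαx hγy)
  linarith

theorem abs_lt_sqrt_four_mul_add_sq {c : ℝ} (hc : 0 < c) (d : ℝ) :
    |d| < √(4 * c + d ^ 2) := by
  rw [Real.lt_sqrt (abs_nonneg d), sq_abs]
  linarith

section Field

variable {K : Type*} [Field K] [NeZero (2 : K)] {c d s : K}

theorem two_mul_div_add_eq_sub_div_two (hs : s ^ 2 = 4 * c + d ^ 2) (hsd : s + d ≠ 0) :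
    2 * c / (s + d) = (s - d) / 2 := by
  rw [div_eq_div_iff hsd two_ne_zero]
  linear_combination -hs

theorem sub_div_two_mul_sub_div_two_add (hs : s ^ 2 = 4 * c + d ^ 2) :
    (s - d) / 2 * ((s - d) / 2 + d) = c := by
  have two_ne : (2 : K) ≠ 0 := two_ne_zero
  field_simp
  linear_combination hs

end Field

theorem ratio_le_general (b β : ℝ) (hbβ : 0 < b * β) (x y : ℝ)
    (hx : 0 ≤ x) (hy : 0 ≤ y) (hxy : 0 < x + y) :
    (β * x + y + 2 * Real.sqrt (b * β * x * y)) / (x + y) ≤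
      β + (2 * b * β) / (Real.sqrt (4 * b * β + (β - 1) ^ 2) + β - 1) := by
  simp only [mul_assoc _ b β, add_sub_assoc]
  have sq_sqrt_disc : √(4 * (b * β) + (β - 1) ^ 2) ^ 2 = 4 * (b * β) + (β - 1) ^ 2 :=
    Real.sq_sqrt (by positivity)
  obtain ⟨neg_lt_sqrt_disc, lt_sqrt_disc⟩ := abs_lt.mp (abs_lt_sqrt_four_mul_add_sq hbβ (β - 1))
  set s := √(4 * (b * β) + (β - 1) ^ 2)
  rw [two_mul_div_add_eq_sub_div_two sq_sqrt_disc (by linarith), div_le_iff₀ hxy]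
  have β_le : β ≤ β + (s - (β - 1)) / 2 := by linarith
  have one_le : 1 ≤ β + (s - (β - 1)) / 2 := by linarith
  have factor_eq : b * β = (β + (s - (β - 1)) / 2 - β) * (β + (s - (β - 1)) / 2 - 1) := by
    linear_combination -sub_div_two_mul_sub_div_two_add sq_sqrt_disc
  simpa only [one_mul] using
    add_add_two_mul_sqrt_le_mul_add β_le one_le factor_eq.le hx hy

theorem ratio_le (b β : ℝ) (hb : 0 < b) (hβ : 1 ≤ β) (x y : ℝ)
    (hx : 0 < x) (hy : 0 < y) :
    (β * x + y + 2 * Real.sqrt (b * β * x * y)) / (x + y) ≤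
      β + (2 * b * β) / (Real.sqrt (4 * b * β + (β - 1) ^ 2) + β - 1) :=
  ratio_le_general b β (mul_pos hb (by linarith)) x y hx.le hy.le (add_pos hx hy)
end
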